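/- Let w ∈ W and let w' = π_{J,δ}(w) ∈ W^J. If ℓ(w) = ℓ(w'), then w ≈_{J,δ} w'. -/

import Mathlib

open CoxeterSystem

variable {B : Type*} [Finite B] {W : Type*} [Group W] {M : CoxeterMatrix B}

namespace PartialConjugation

/-- The standard parabolic subgroup `W_J` of `W`, generated by the simple
reflections indexed by `J`. -/
def parab (cs : CoxeterSystem M W) (J : Set B) : Subgroup W :=
  Subgroup.closure (cs.simple '' J)

/-- The simple reflection `s_j` (for `j ∈ J`), viewed as an element of `W_J`. -/
def sJ (cs : CoxeterSystem M W) (J : Set B) (j : B) (hj : j ∈ J) : parab cs J :=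
  ⟨cs.simple j, Subgroup.subset_closure ⟨j, hj, rfl⟩⟩

/-- `w ∈ W^J`: `w` is a minimal length representative of its left coset `w W_J`. -/
def IsMinRep (cs : CoxeterSystem M W) (J : Set B) (w : W) : Prop :=
  ∀ v ∈ parab cs J, cs.length w ≤ cs.length (w * v)

variable (cs : CoxeterSystem M W) (J J' : Set B) (δ : parab cs J ≃* parab cs J')

/-- `δ` carries the set of simple reflections indexed by `J` onto the set of
simple reflections indexed by `J'`. -/
def MapsSimples : Prop :=
  (∀ j, ∀ hj : j ∈ J, ∃ j' ∈ J', (δ (sJ cs J j hj) : W) = cs.simple j') ∧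
  (∀ j' ∈ J', ∃ j, ∃ hj : j ∈ J, (δ (sJ cs J j hj) : W) = cs.simple j')

/-- `K` is a `w`-special subset of `J`. -/
def WSpecial (w : W) (K : Set B) : Prop :=
  K ⊆ J ∧ ∀ k ∈ K, ∃ j, ∃ hjJ : j ∈ J, j ∈ K ∧
    w * cs.simple k * w⁻¹ = (δ (sJ cs J j hjJ) : W)

/-- The set `I(J, w, δ)`: the union of all `w`-special subsets of `J`. -/
def Iset (w : W) : Set B := ⋃₀ {K | WSpecial cs J J' δ w K}

/-- The set `W_J ·_δ V = {δ(u) v u⁻¹ : u ∈ W_J, v ∈ V}`. -/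
def orbSet (V : Set W) : Set W :=
  {x | ∃ u : parab cs J, ∃ v ∈ V, x = (δ u : W) * v * (u : W)⁻¹}

/-- The orbit of `x` under the `δ`-twisted partial conjugation action of `W_J`. -/
def orbitOf (x : W) : Set W := orbSet cs J J' δ {x}

/-- The coset `w W_{I(J,w,δ)}`. -/
def coset (w : W) : Set W :=
  {x | ∃ v ∈ parab cs (Iset cs J J' δ w), x = w * v}

/-- Elementary step `v →_i v'` of `δ`-twisted conjugation: `v' = δ(s_i) v s_i`
with `i ∈ J` and `ℓ(v') ≤ ℓ(v)`. -/
def StepRel (v v' : W) : Prop :=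
  ∃ i, ∃ hi : i ∈ J, v' = (δ (sJ cs J i hi) : W) * v * cs.simple i ∧
    cs.length v' ≤ cs.length v

/-- The relation `v →_{J,δ} v'`. -/
def ToRel : W → W → Prop := Relation.ReflTransGen (StepRel cs J J' δ)

/-- The relation `v ≈_{J,δ} v'`. -/
def Approx (v v' : W) : Prop := ToRel cs J J' δ v v' ∧ ToRel cs J J' δ v' v

/-- The Bruhat order on `W`. -/
def bruhatLE (cs : CoxeterSystem M W) : W → W → Prop :=
  Relation.ReflTransGen
    (fun a b => ∃ t, cs.IsReflection t ∧ b = a * t ∧ cs.length a < cs.length b)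

/-- The set of minimal length elements in the orbit of `x`. -/
def orbMin (x : W) : Set W :=
  {y ∈ orbitOf cs J J' δ x | ∀ z ∈ orbitOf cs J J' δ x, cs.length y ≤ cs.length z}


set_option linter.unusedSectionVars false

section Exchange

theorem end_mul_apply {X : Type*} (f g : Function.End X) (x : X) : (f * g) x = f (g x) := rfl

theorem end_one_apply {X : Type*} (x : X) : (1 : Function.End X) x = x := rfl

/-- The elementary generator of the sign action on `W × ℤ/2`. -/
noncomputable def signGen (cs : CoxeterSystem M W) (i : B) : Function.End (W × ZMod 2) :=
  open Classical in
  fun p => (cs.simple i * p.1 * cs.simple i, p.2 + if p.1 = cs.simple i then 1 else 0)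

theorem signGen_pow (cs : CoxeterSystem M W) (i j : B) (k : ℕ) (t : W) (e : ZMod 2) :
    open Classical in
    ((signGen cs i * signGen cs j) ^ k) (t, e) =
      ((cs.simple i * cs.simple j) ^ k * t * ((cs.simple i * cs.simple j) ^ k)⁻¹,
        e + ∑ n ∈ Finset.range (2 * k),
          if t = cs.simple j * (cs.simple i * cs.simple j) ^ n then 1 else 0) := by
  classical
  have hinv : ∀ l : ℕ, ((cs.simple i * cs.simple j) ^ l)⁻¹ * cs.simple j =
      cs.simple j * (cs.simple i * cs.simple j) ^ l := by
    intro l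
    induction l with
    | zero => simp
    | succ l ih =>
      rw [pow_succ, mul_inv_rev, mul_assoc, ih]
      conv_rhs => rw [← pow_succ, pow_succ']
      simp [mul_assoc]
  induction k with
  | zero => simp [end_one_apply]
  | succ k ih =>
    rw [pow_succ', end_mul_apply, ih, end_mul_apply]
    set P := cs.simple i * cs.simple j with hP
    have h1 : (P ^ k * t * (P ^ k)⁻¹ = cs.simple j) ↔ t = cs.simple j * P ^ (2 * k) := by
      rw [mul_inv_eq_iff_eq_mul, ← eq_inv_mul_iff_mul_eq, ← mul_assoc, hinv, mul_assoc, ← pow_add,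
        two_mul]
    have h2 : (cs.simple j * (P ^ k * t * (P ^ k)⁻¹) * cs.simple j = cs.simple i) ↔
        t = cs.simple j * P ^ (2 * k + 1) := by
      have : cs.simple j * (P ^ k * t * (P ^ k)⁻¹) * cs.simple j = cs.simple i ↔
          P ^ k * t * (P ^ k)⁻¹ = cs.simple j * cs.simple i * cs.simple j := by
        constructor
        · intro h
          rw [← h]; simp [mul_assoc]
        · intro h
          rw [h]; simp [mul_assoc]
      rw [this, mul_inv_eq_iff_eq_mul, ← eq_inv_mul_iff_mul_eq, mul_assoc (cs.simple j), ← hP,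
        mul_assoc (cs.simple j), ← mul_assoc _ (cs.simple j), hinv, mul_assoc, ← pow_succ',
        ← pow_add]
      rw [show k + (k + 1) = 2 * k + 1 by ring]
    simp only [signGen, h1, h2]
    rw [show 2 * (k + 1) = 2 * k + 1 + 1 by ring, Finset.sum_range_succ, Finset.sum_range_succ,
      pow_succ']
    refine Prod.ext ?_ ?_
    · rw [pow_succ' P k, mul_inv_rev, hP]
      simp [mul_assoc]
    · simp [add_assoc]

theorem signGen_liftable (cs : CoxeterSystem M W) : M.IsLiftable (signGen cs) := by
  classical
  intro i j
  funext ⟨t, e⟩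
  rw [signGen_pow, cs.simple_mul_simple_pow, two_mul, Finset.sum_range_add]
  have : ∀ n, (cs.simple i * cs.simple j) ^ (M i j + n) = (cs.simple i * cs.simple j) ^ n := by
    intro n; rw [pow_add, cs.simple_mul_simple_pow, one_mul]
  simp only [this, CharTwo.add_self_eq_zero]
  simp [end_one_apply]

theorem sign_word (cs : CoxeterSystem M W) (ω : List B) (t : W) (e : ZMod 2) :
    open Classical in
    cs.lift ⟨signGen cs, signGen_liftable cs⟩ (cs.wordProd ω) (t, e) =
      (cs.wordProd ω * t * (cs.wordProd ω)⁻¹, e + ((cs.rightInvSeq ω).count t : ℕ)) := by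
  classical
  induction ω with
  | nil => simp [end_one_apply]
  | cons i ω ih =>
    rw [cs.wordProd_cons, map_mul, end_mul_apply, ih,
      cs.lift_apply_simple]
    have h1 : (cs.wordProd ω * t * (cs.wordProd ω)⁻¹ = cs.simple i) ↔
        (cs.wordProd ω)⁻¹ * cs.simple i * cs.wordProd ω = t := by
      rw [mul_inv_eq_iff_eq_mul, ← eq_inv_mul_iff_mul_eq, mul_assoc, eq_comm]
    simp only [signGen, h1, CoxeterSystem.rightInvSeq, List.count_cons, beq_iff_eq]
    refine Prod.ext ?_ ?_
    · simp [mul_assoc]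
    · push_cast
      simp [add_assoc]

/-- The exchange condition, for arbitrary words. -/
theorem exch_right (cs : CoxeterSystem M W) (ω : List B) (i : B)
    (h : cs.length (cs.wordProd ω * cs.simple i) < cs.length (cs.wordProd ω)) :
    ∃ j < ω.length, cs.wordProd ω * cs.simple i = cs.wordProd (ω.eraseIdx j) := by
  classical
  obtain ⟨ω', hω', he⟩ := cs.exists_isReduced (cs.wordProd ω * cs.simple i)
  have hw : cs.wordProd ω = cs.wordProd (ω'.concat i) := by
    rw [cs.wordProd_concat, ← he]; simp
  have hred : cs.IsReduced (ω'.concat i) := by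
    have h1 := cs.length_wordProd_le (ω'.concat i)
    have h2 := hω'.eq
    rw [← he] at h2
    unfold CoxeterSystem.IsReduced
    rw [← hw] at h1 ⊢
    simp only [List.length_concat] at *
    omega
  have hnd := hred.nodup_rightInvSeq
  have hmem : cs.simple i ∈ cs.rightInvSeq (ω'.concat i) := by
    rw [cs.rightInvSeq_concat]; simp
  have hc := List.count_eq_one_of_mem hnd hmem
  have e1 := sign_word cs ω (cs.simple i) 0
  rw [hw, sign_word cs (ω'.concat i), hc] at e1
  have e2 := congrArg Prod.snd e1
  simp only [zero_add, Nat.cast_one] at e2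
  have hpos : cs.simple i ∈ cs.rightInvSeq ω := by
    by_contra hn
    rw [List.count_eq_zero_of_not_mem hn] at e2
    simp at e2
  obtain ⟨j, hj, hj'⟩ := List.mem_iff_getElem.mp hpos
  rw [cs.length_rightInvSeq] at hj
  refine ⟨j, hj, ?_⟩
  rw [← cs.wordProd_mul_getD_rightInvSeq, List.getD_eq_getElem _ 1 (by simpa using hj), hj']

theorem exch_left (cs : CoxeterSystem M W) (ω : List B) (i : B)
    (h : cs.length (cs.simple i * cs.wordProd ω) < cs.length (cs.wordProd ω)) :
    ∃ ω' : List B, ω'.length + 1 = ω.length ∧ (∀ k ∈ ω', k ∈ ω) ∧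
      cs.simple i * cs.wordProd ω = cs.wordProd ω' := by
  obtain ⟨j, hj, he⟩ := exch_right cs ω.reverse i (by
    rw [cs.wordProd_reverse, cs.length_inv, ← cs.length_inv]
    simpa using h)
  refine ⟨(ω.reverse.eraseIdx j).reverse, ?_, ?_, ?_⟩
  · rw [List.length_reverse, List.length_eraseIdx_add_one hj, List.length_reverse]
  · intro k hk
    rw [List.mem_reverse] at hk
    simpa using List.mem_of_mem_eraseIdx hk
  · rw [cs.wordProd_reverse, ← he]; simp

/-- Exchange for a product. -/
theorem exch_mul (cs : CoxeterSystem M W) (ω : List B) (u : W) (i : B)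
    (h : cs.length (cs.wordProd ω * u * cs.simple i) < cs.length (cs.wordProd ω * u)) :
    (∃ j < ω.length, cs.wordProd ω * u * cs.simple i = cs.wordProd (ω.eraseIdx j) * u) ∨
      cs.length (u * cs.simple i) < cs.length u := by
  obtain ⟨υ, hυ, rfl⟩ := cs.exists_isReduced u
  rw [← cs.wordProd_append] at h
  obtain ⟨j, hj, he⟩ := exch_right cs _ i h
  rw [List.length_append] at hj
  rcases lt_or_ge j ω.length with hlt | hge
  · left
    refine ⟨j, hlt, ?_⟩
    rw [List.eraseIdx_append_of_lt_length hlt] at he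
    rw [← cs.wordProd_append, he, cs.wordProd_append]
  · right
    rw [List.eraseIdx_append_of_length_le hge, cs.wordProd_append, cs.wordProd_append, mul_assoc,
      mul_left_cancel_iff] at he
    rw [he, hυ.eq]
    have h1 := cs.length_wordProd_le (υ.eraseIdx (j - ω.length))
    have h2 := List.length_eraseIdx_add_one (l := υ) (i := j - ω.length) (by omega)
    omega

end Exchange

section Parabolic

theorem simple_mem (cs : CoxeterSystem M W) {J : Set B} {j : B} (hj : j ∈ J) :
    cs.simple j ∈ parab cs J := Subgroup.subset_closure ⟨j, hj, rfl⟩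

theorem parab_mono (cs : CoxeterSystem M W) {J K : Set B} (h : J ⊆ K) :
    parab cs J ≤ parab cs K := Subgroup.closure_mono (Set.image_mono h)

theorem word_mem (cs : CoxeterSystem M W) {J : Set B} (ω : List B) (h : ∀ i ∈ ω, i ∈ J) :
    cs.wordProd ω ∈ parab cs J := by
  induction ω with
  | nil => simp
  | cons i ω ih =>
    rw [cs.wordProd_cons]
    exact (parab cs J).mul_mem (simple_mem cs (h i (by simp)))
      (ih fun k hk => h k (by simp [hk]))

/-- Induction on a parabolic subgroup by left multiplication. -/
theorem parab_induction (cs : CoxeterSystem M W) {J : Set B} {p : W → Prop} (one : p 1)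
    (mul : ∀ j ∈ J, ∀ u ∈ parab cs J, p u → p (cs.simple j * u)) {u : W} (hu : u ∈ parab cs J) :
    p u := by
  refine Subgroup.closure_induction_left (p := fun x _ => p x) one ?_ ?_ hu
  · rintro _ ⟨j, hj, rfl⟩ y hy h
    exact mul j hj y hy h
  · rintro _ ⟨j, hj, rfl⟩ y hy h
    rw [cs.inv_simple]
    exact mul j hj y hy h

theorem exists_reduced (cs : CoxeterSystem M W) {J : Set B} {u : W} (hu : u ∈ parab cs J) :
    ∃ ω : List B, (∀ i ∈ ω, i ∈ J) ∧ cs.wordProd ω = u ∧ cs.length u = ω.length := by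
  refine parab_induction cs (p := fun u => ∃ ω : List B, (∀ i ∈ ω, i ∈ J) ∧ cs.wordProd ω = u ∧
    cs.length u = ω.length) ⟨[], by simp⟩ ?_ hu
  rintro j hj u hu ⟨ω, hω, rfl, hl⟩
  rcases cs.length_simple_mul (cs.wordProd ω) j with h | h
  · refine ⟨j :: ω, ?_, cs.wordProd_cons _ _, ?_⟩
    · intro i hi
      rcases List.mem_cons.mp hi with rfl | hi
      · exact hj
      · exact hω i hi
    · rw [h, hl]; simp
  · obtain ⟨ω', h1, h2, h3⟩ := exch_left cs ω j (by omega)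
    exact ⟨ω', fun i hi => hω i (h2 i hi), h3.symm, by omega⟩

theorem simple_of_length_one (cs : CoxeterSystem M W) {J : Set B} {u : W} (hu : u ∈ parab cs J)
    (h : cs.length u = 1) : ∃ j ∈ J, u = cs.simple j := by
  obtain ⟨ω, h1, rfl, h3⟩ := exists_reduced cs hu
  rw [h] at h3
  obtain ⟨j, rfl⟩ := List.length_eq_one_iff.mp h3.symm
  exact ⟨j, h1 j (by simp), by simp⟩

theorem length_add (cs : CoxeterSystem M W) {J : Set B} {x u : W} (hx : IsMinRep cs J x)
    (hu : u ∈ parab cs J) : cs.length (x * u) = cs.length x + cs.length u := by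
  obtain ⟨ω, h1, rfl, h3⟩ := exists_reduced cs hu
  rw [h3]
  clear hu
  induction ω using List.reverseRecOn with
  | nil => simp
  | append_singleton ω i ih =>
    have hωJ : ∀ k ∈ ω, k ∈ J := fun k hk => h1 k (by simp [hk])
    have hi : i ∈ J := h1 i (by simp)
    have hle := cs.length_wordProd_le ω
    rw [cs.wordProd_append, cs.wordProd_singleton] at h3 ⊢
    have hlen : cs.length (cs.wordProd ω) = ω.length := by
      have := cs.length_mul_le (cs.wordProd ω) (cs.simple i)
      rw [cs.length_simple] at this
      simp at h3
      omega
    have ih := ih hωJ hlen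
    rw [← mul_assoc]
    rcases cs.length_mul_simple (x * cs.wordProd ω) i with h | h
    · rw [h, ih]; simp [add_assoc]
    · exfalso
      obtain ⟨ξ, hξ, rfl⟩ := cs.exists_isReduced x
      rcases exch_mul cs ξ (cs.wordProd ω) i (by omega) with ⟨j, hj, he⟩ | hlt
      · have hm := hx (cs.wordProd ω * cs.simple i * (cs.wordProd ω)⁻¹)
          ((parab cs J).mul_mem ((parab cs J).mul_mem (word_mem cs ω hωJ) (simple_mem cs hi))
            ((parab cs J).inv_mem (word_mem cs ω hωJ)))
        rw [← mul_assoc, ← mul_assoc, he, mul_inv_cancel_right, hξ.eq] at hm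
        have := cs.length_wordProd_le (ξ.eraseIdx j)
        have := List.length_eraseIdx_add_one hj
        omega
      · simp at h3
        omega

/-- Every element has a decomposition as minimal representative times parabolic element. -/
theorem exists_decomp (cs : CoxeterSystem M W) (J : Set B) (w : W) :
    ∃ x u, IsMinRep cs J x ∧ u ∈ parab cs J ∧ w = x * u := by
  classical
  have hex : ∃ n, ∃ v ∈ parab cs J, cs.length (w * v) = n := ⟨_, 1, (parab cs J).one_mem, rfl⟩
  obtain ⟨v, hv, hl⟩ := Nat.find_spec hex
  refine ⟨w * v, v⁻¹, ?_, (parab cs J).inv_mem hv, by simp⟩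
  intro v' hv'
  rw [hl]
  exact Nat.find_min' hex ⟨v * v', (parab cs J).mul_mem hv hv', by rw [mul_assoc]⟩

theorem isMinRep_of_no_descent (cs : CoxeterSystem M W) {J : Set B} {x : W}
    (h : ∀ j ∈ J, cs.length x ≤ cs.length (x * cs.simple j)) : IsMinRep cs J x := by
  obtain ⟨m, u, hm, hu, rfl⟩ := exists_decomp cs J x
  obtain ⟨ω, h1, rfl, h3⟩ := exists_reduced cs hu
  induction ω using List.reverseRecOn with
  | nil => simpa using hm
  | append_singleton ω i _ =>
    exfalso
    have := h i (h1 i (by simp))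
    rw [length_add cs hm hu, h3, cs.wordProd_append, cs.wordProd_singleton, mul_assoc, mul_assoc,
      cs.simple_mul_simple_self, mul_one] at this
    have h4 := cs.length_mul_le m (cs.wordProd ω)
    have h5 := cs.length_wordProd_le ω
    simp at this
    omega

theorem length_add' (cs : CoxeterSystem M W) {J : Set B} {x u : W} (hx : IsMinRep cs J x⁻¹)
    (hu : u ∈ parab cs J) : cs.length (u * x) = cs.length u + cs.length x := by
  have := length_add cs hx ((parab cs J).inv_mem hu)
  rw [← mul_inv_rev, cs.length_inv, cs.length_inv, cs.length_inv] at this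
  omega

theorem double_coset (cs : CoxeterSystem M W) {J J' : Set B} {y y' : W}
    (hy : IsMinRep cs J y) (hy1 : IsMinRep cs J' y⁻¹)
    (hy' : IsMinRep cs J y') (hy1' : IsMinRep cs J' y'⁻¹) {c d : W} (hc : c ∈ parab cs J')
    (hd : d ∈ parab cs J) (h : c * y' = y * d) :
    y' = y ∧ c ∈ parab cs {j' | j' ∈ J' ∧ ∃ k ∈ J, cs.simple j' * y = y * cs.simple k} := by
  obtain ⟨ω, h1, rfl, h3⟩ := exists_reduced cs hd
  clear hd
  induction ω using List.reverseRecOn generalizing c with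
  | nil =>
    simp only [cs.wordProd_nil, mul_one] at h
    have e1 := length_add' cs hy1' hc
    have e2 := length_add' cs hy1 ((parab cs J').inv_mem hc)
    rw [← h, inv_mul_cancel_left, cs.length_inv, h] at e2
    rw [h] at e1
    have : c = 1 := cs.length_eq_zero_iff.mp (by omega)
    subst this
    exact ⟨by simpa using h, Subgroup.one_mem _⟩
  | append_singleton ω i ih =>
    have hωJ : ∀ k ∈ ω, k ∈ J := fun k hk => h1 k (by simp [hk])
    have hi : i ∈ J := h1 i (by simp)
    have hω := word_mem cs ω hωJ
    have hle := cs.length_wordProd_le ω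
    have hadd := length_add cs hy (word_mem cs _ h1)
    rw [cs.wordProd_append, cs.wordProd_singleton] at h3 h hadd
    have hlen : cs.length (cs.wordProd ω) = ω.length := by
      have := cs.length_mul_le (cs.wordProd ω) (cs.simple i)
      rw [cs.length_simple] at this
      simp at h3
      omega
    have h4 : c * y' * cs.simple i = y * cs.wordProd ω := by
      rw [h]; simp [mul_assoc]
    obtain ⟨γ, hγ, rfl, hγl⟩ := exists_reduced cs hc
    rcases exch_mul cs γ y' i (by
      rw [h4, h, hadd, length_add cs hy hω, h3, hlen]; simp) with ⟨j, hj, he⟩ | hlt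
    · have hγ' : cs.wordProd (γ.eraseIdx j) ∈ parab cs J' :=
        word_mem cs _ fun k hk => hγ k (List.mem_of_mem_eraseIdx hk)
      obtain ⟨rfl, hK⟩ := ih hγ' hωJ (by rw [← he, h4]) hlen
      refine ⟨rfl, ?_⟩
      have h5 : (cs.wordProd (γ.eraseIdx j))⁻¹ * cs.wordProd γ * y' = y' * cs.simple i := by
        rw [mul_assoc, inv_mul_eq_iff_eq_mul, ← mul_assoc, ← he]; simp
      have h6 : (cs.wordProd (γ.eraseIdx j))⁻¹ * cs.wordProd γ ∈ parab cs J' :=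
        (parab cs J').mul_mem ((parab cs J').inv_mem hγ') hc
      have h7 := length_add' cs hy1 h6
      rw [h5, length_add cs hy (simple_mem cs hi), cs.length_simple] at h7
      obtain ⟨k, hk, hk'⟩ := simple_of_length_one cs h6 (by omega)
      rw [hk'] at h5
      rw [inv_mul_eq_iff_eq_mul] at hk'
      rw [hk']
      exact Subgroup.mul_mem _ hK (simple_mem cs ⟨hk, i, hi, h5⟩)
    · have := hy' _ (simple_mem cs hi)
      omega

end Parabolic

section Twisted

/-- An unbundled version of the twisting isomorphism. -/
structure Tw (cs : CoxeterSystem M W) (J J' : Set B) (φ : W → W) : Prop where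
  mul : ∀ u ∈ parab cs J, ∀ v ∈ parab cs J, φ (u * v) = φ u * φ v
  simple : ∀ j ∈ J, ∃ j' ∈ J', φ (cs.simple j) = cs.simple j'
  surj : ∀ j' ∈ J', ∃ j ∈ J, φ (cs.simple j) = cs.simple j'
  inj : ∀ u ∈ parab cs J, φ u = 1 → u = 1

/-- Elementary step for the unbundled twist. -/
def Stp (cs : CoxeterSystem M W) (J : Set B) (φ : W → W) (v v' : W) : Prop :=
  ∃ i ∈ J, v' = φ (cs.simple i) * v * cs.simple i ∧ cs.length v' ≤ cs.length v

namespace Tw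

variable {cs : CoxeterSystem M W} {J J' : Set B} {φ : W → W}

theorem one (T : Tw cs J J' φ) : φ 1 = 1 := by
  have := T.mul 1 (Subgroup.one_mem _) 1 (Subgroup.one_mem _)
  simpa using this

theorem inv (T : Tw cs J J' φ) {u : W} (hu : u ∈ parab cs J) : φ u⁻¹ = (φ u)⁻¹ := by
  have := T.mul u⁻¹ (Subgroup.inv_mem _ hu) u hu
  rw [inv_mul_cancel, T.one] at this
  exact eq_inv_of_mul_eq_one_left this.symm

theorem injective (T : Tw cs J J' φ) {u v : W} (hu : u ∈ parab cs J) (hv : v ∈ parab cs J)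
    (h : φ u = φ v) : u = v := by
  have := T.inj (u⁻¹ * v) (Subgroup.mul_mem _ (Subgroup.inv_mem _ hu) hv) (by
    rw [T.mul _ (Subgroup.inv_mem _ hu) _ hv, T.inv hu, h, inv_mul_cancel])
  exact (inv_mul_eq_one.mp this)

theorem mem (T : Tw cs J J' φ) {u : W} (hu : u ∈ parab cs J) : φ u ∈ parab cs J' := by
  refine parab_induction cs (p := fun u => φ u ∈ parab cs J') ?_ ?_ hu
  · rw [T.one]; exact Subgroup.one_mem _
  · intro j hj u hu h
    rw [T.mul _ (simple_mem cs hj) _ hu]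
    obtain ⟨j', hj', he⟩ := T.simple j hj
    rw [he]
    exact Subgroup.mul_mem _ (simple_mem cs hj') h

/-- Lifting words through the twist, with control on the support and length. -/
theorem lift_word (T : Tw cs J J' φ) {K' : Set B} (hK : K' ⊆ J') (ω : List B)
    (h : ∀ i ∈ ω, i ∈ K') :
    ∃ u ∈ parab cs {j | j ∈ J ∧ ∃ k ∈ K', φ (cs.simple j) = cs.simple k},
      φ u = cs.wordProd ω ∧ cs.length u ≤ ω.length := by
  induction ω with
  | nil => exact ⟨1, Subgroup.one_mem _, by simp [T.one]⟩
  | cons i ω ih =>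
    obtain ⟨u, hu, he, hl⟩ := ih fun k hk => h k (by simp [hk])
    obtain ⟨j, hj, hji⟩ := T.surj i (hK (h i (by simp)))
    have huJ : u ∈ parab cs J := parab_mono cs (fun _ hx => hx.1) hu
    refine ⟨cs.simple j * u, Subgroup.mul_mem _ (simple_mem cs ⟨hj, i, h i (by simp), hji⟩) hu,
      ?_, ?_⟩
    · rw [T.mul _ (simple_mem cs hj) _ huJ, hji, he, cs.wordProd_cons]
    · have := cs.length_mul_le (cs.simple j) u
      rw [cs.length_simple] at this
      simp
      omega

theorem length_le (T : Tw cs J J' φ) {u : W} (hu : u ∈ parab cs J) :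
    cs.length (φ u) ≤ cs.length u := by
  obtain ⟨ω, h1, rfl, h3⟩ := exists_reduced cs hu
  rw [h3]
  clear h3 hu
  induction ω with
  | nil => simp [T.one]
  | cons i ω ih =>
    have hω : ∀ k ∈ ω, k ∈ J := fun k hk => h1 k (by simp [hk])
    have hi : i ∈ J := h1 i (by simp)
    rw [cs.wordProd_cons, T.mul _ (simple_mem cs hi) _ (word_mem cs ω hω)]
    obtain ⟨j', _, he⟩ := T.simple i hi
    have := cs.length_mul_le (φ (cs.simple i)) (φ (cs.wordProd ω))
    rw [he, cs.length_simple] at this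
    have := ih hω
    rw [he]
    simp
    omega

theorem length_eq (T : Tw cs J J' φ) {u : W} (hu : u ∈ parab cs J) :
    cs.length (φ u) = cs.length u := by
  apply le_antisymm (T.length_le hu)
  obtain ⟨ω, h1, h2, h3⟩ := exists_reduced cs (T.mem hu)
  obtain ⟨v, hv, he, hl⟩ := T.lift_word subset_rfl ω h1
  have : v = u := T.injective (parab_mono cs (fun _ hx => hx.1) hv) hu (by rw [he, h2])
  rw [h3, ← this]
  exact hl

theorem mem_of_mem (T : Tw cs J J' φ) {K' : Set B} (hK : K' ⊆ J') {u : W} (hu : u ∈ parab cs J)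
    (h : φ u ∈ parab cs K') :
    u ∈ parab cs {j | j ∈ J ∧ ∃ k ∈ K', φ (cs.simple j) = cs.simple k} := by
  obtain ⟨ω, h1, h2, h3⟩ := exists_reduced cs h
  obtain ⟨v, hv, he, hl⟩ := T.lift_word hK ω h1
  have : v = u := T.injective (parab_mono cs (fun _ hx => hx.1) hv) hu (by rw [he, h2])
  exact this ▸ hv

end Tw

theorem stp_length (cs : CoxeterSystem M W) {J : Set B} {φ : W → W} {v v' : W}
    (h : Relation.ReflTransGen (Stp cs J φ) v v') : cs.length v' ≤ cs.length v := by
  induction h with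
  | refl => exact le_rfl
  | tail _ h ih =>
    obtain ⟨i, _, _, hl⟩ := h
    exact hl.trans ih

theorem stp_reverse {cs : CoxeterSystem M W} {J J' : Set B} {φ : W → W} (T : Tw cs J J' φ)
    {v v' : W} (h : Relation.ReflTransGen (Stp cs J φ) v v')
    (hl : cs.length v ≤ cs.length v') : Relation.ReflTransGen (Stp cs J φ) v' v := by
  induction h with
  | refl => exact Relation.ReflTransGen.refl
  | @tail b c hb hbc ih =>
    have h1 := stp_length cs hb
    obtain ⟨i, hi, he, hbl⟩ := hbc
    refine Relation.ReflTransGen.head ⟨i, hi, ?_, by omega⟩ (ih (by omega))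
    obtain ⟨j, _, hj⟩ := T.simple i hi
    rw [he, hj]
    simp [mul_assoc]

/-- Moving the left factor to the right. -/
theorem descend {cs : CoxeterSystem M W} {J J' : Set B} {φ : W → W} (T : Tw cs J J' φ) (n : ℕ) :
    ∀ x d : W, cs.length x = n → IsMinRep cs J x → d ∈ parab cs J →
      ∃ y a, IsMinRep cs J y ∧ IsMinRep cs J' y⁻¹ ∧ a ∈ parab cs J ∧ x = φ a * y ∧
        Relation.ReflTransGen (Stp cs J φ) (x * d) (y * (d * a)) := by
  induction n using Nat.strong_induction_on with
  | _ n IH =>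
    intro x d hn hx hd
    by_cases hdesc : ∀ j ∈ J', cs.length x⁻¹ ≤ cs.length (x⁻¹ * cs.simple j)
    · exact ⟨x, 1, hx, isMinRep_of_no_descent cs hdesc, Subgroup.one_mem _, by simp [T.one],
        by rw [mul_one]⟩
    · push Not at hdesc
      obtain ⟨t, ht, hlt⟩ := hdesc
      obtain ⟨j, hj, hjt⟩ := T.surj t ht
      have hlt' : cs.length (cs.simple t * x) < cs.length x := by
        rw [cs.length_inv, ← cs.length_inv (x⁻¹ * cs.simple t)] at hlt
        simpa using hlt
      have hmin : IsMinRep cs J (cs.simple t * x) := by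
        intro v hv
        have h1 := length_add cs hx hv
        rw [mul_assoc]
        rcases cs.length_simple_mul (x * v) t with h2 | h2 <;> omega
      have hjJ := simple_mem cs hj
      obtain ⟨y, a, hy, hy', ha, he, hto⟩ := IH _ (hn ▸ hlt') _ (d * cs.simple j) rfl hmin
        (Subgroup.mul_mem _ hd hjJ)
      refine ⟨y, cs.simple j * a, hy, hy', Subgroup.mul_mem _ hjJ ha, ?_, ?_⟩
      · rw [T.mul _ hjJ _ ha, mul_assoc, ← he, hjt]; simp
      · have hto' : Relation.ReflTransGen (Stp cs J φ) (cs.simple t * x * (d * cs.simple j))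
            (y * (d * (cs.simple j * a))) := by
          rw [← mul_assoc d]; exact hto
        refine Relation.ReflTransGen.head ⟨j, hj, ?_, ?_⟩ hto'
        · rw [hjt]; simp [mul_assoc]
        · rw [length_add cs hx hd, length_add cs hmin (Subgroup.mul_mem _ hd hjJ)]
          have := cs.length_mul_le d (cs.simple j)
          rw [cs.length_simple] at this
          omega

theorem stp_lift {cs : CoxeterSystem M W} {J J1 K : Set B} {φ φ1 : W → W} {y : W}
    (hJ : J1 ⊆ J) (hy : IsMinRep cs J y) (hK : K ⊆ J) (T1 : Tw cs J1 K φ1)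
    (hφ : ∀ g, y * φ1 g = φ g * y) {b b' : W} (hb : b ∈ parab cs J)
    (h : Relation.ReflTransGen (Stp cs J1 φ1) b b') :
    Relation.ReflTransGen (Stp cs J φ) (y * b) (y * b') ∧ b' ∈ parab cs J := by
  induction h with
  | refl => exact ⟨Relation.ReflTransGen.refl, hb⟩
  | @tail p q _ hpq ih =>
    obtain ⟨ih1, hp⟩ := ih
    obtain ⟨i, hi, he, hl⟩ := hpq
    have hq : q ∈ parab cs J := by
      rw [he]
      exact Subgroup.mul_mem _ (Subgroup.mul_mem _
        (parab_mono cs hK (T1.mem (simple_mem cs hi))) hp) (simple_mem cs (hJ hi))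
    refine ⟨ih1.tail ⟨i, hJ hi, ?_, ?_⟩, hq⟩
    · rw [he, ← mul_assoc, ← mul_assoc, hφ, mul_assoc (φ _)]
    · rw [length_add cs hy hp, length_add cs hy hq]
      omega

theorem main_aux (cs : CoxeterSystem M W) (n : ℕ) : ∀ (J J' : Set B) (φ : W → W), J.ncard = n →
    Tw cs J J' φ → ∀ w' : W, IsMinRep cs J w' → ∀ I : Set B, I ⊆ J →
    (∀ k ∈ I, ∃ j ∈ I, w' * cs.simple k = φ (cs.simple j) * w') →
    ∀ v ∈ parab cs I, ∀ u ∈ parab cs J, ∀ w : W, w = φ u * w' * v * u⁻¹ →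
    cs.length w ≤ cs.length w' → Relation.ReflTransGen (Stp cs J φ) w w' := by
  induction n using Nat.strong_induction_on with
  | _ n IH =>
    intro J J' φ hn T w' hw' I hIJ hI v hv u hu w hw hlen
    obtain ⟨y, b', hy, hy', hb', hw'e, hto'⟩ := descend T _ w' 1 rfl hw' (Subgroup.one_mem _)
    rw [mul_one, one_mul] at hto'
    have hlw' : cs.length w' = cs.length b' + cs.length y := by
      rw [hw'e, length_add' cs hy' (T.mem hb'), T.length_eq hb']
    have hback : Relation.ReflTransGen (Stp cs J φ) (y * b') w' :=
      stp_reverse T hto' (by rw [length_add cs hy hb']; omega)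
    obtain ⟨x, d, hx, hd, hwx⟩ := exists_decomp cs J w
    obtain ⟨y2, a, hy2, hy2', ha, hxe, hto⟩ := descend T _ x d rfl hx hd
    rw [← hwx] at hto
    have hvJ : v ∈ parab cs J := parab_mono cs hIJ hv
    -- the set `J1`
    set K' : Set B := {j' | j' ∈ J' ∧ ∃ k ∈ J, cs.simple j' * y = y * cs.simple k} with hK'
    set J1 : Set B := {j | j ∈ J ∧ ∃ k ∈ K', φ (cs.simple j) = cs.simple k} with hJ1
    have hK'J : K' ⊆ J' := fun _ h => h.1
    have hJ1J : J1 ⊆ J := fun _ h => h.1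
    set K : Set B := {k | k ∈ J ∧ ∃ j ∈ J1, φ (cs.simple j) * y = y * cs.simple k} with hK
    have hKJ : K ⊆ J := fun _ h => h.1
    -- equality of double coset representatives
    have hyy : y2 = y := by
      refine (double_coset cs hy hy' hy2 hy2'
        (c := (φ b')⁻¹ * (φ u)⁻¹ * φ a) (d := v * u⁻¹ * d⁻¹) ?_ ?_ ?_).1
      · exact Subgroup.mul_mem _ (Subgroup.mul_mem _ (Subgroup.inv_mem _ (T.mem hb'))
          (Subgroup.inv_mem _ (T.mem hu))) (T.mem ha)
      · exact Subgroup.mul_mem _ (Subgroup.mul_mem _ hvJ (Subgroup.inv_mem _ hu))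
          (Subgroup.inv_mem _ hd)
      · have : φ a * y2 = φ u * (φ b' * y) * v * u⁻¹ * d⁻¹ := by
          rw [← hxe, ← hw'e, ← hw, hwx]; simp
        rw [mul_assoc, this]
        simp [mul_assoc]
    subst hyy
    set b := d * a with hb
    have hbJ : b ∈ parab cs J := Subgroup.mul_mem _ hd ha
    -- the twist `φ1`
    let φ1 : W → W := fun g => y2⁻¹ * φ g * y2
    have T1 : Tw cs J1 K φ1 := by
      refine ⟨?_, ?_, ?_, ?_⟩
      · intro g hg h hh
        simp only [φ1, T.mul g (parab_mono cs hJ1J hg) h (parab_mono cs hJ1J hh)]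
        simp [mul_assoc]
      · intro j hj
        obtain ⟨hjJ, k', ⟨_, k, hk, hkk⟩, he⟩ := id hj
        refine ⟨k, ⟨hk, j, hj, by rw [he, hkk]⟩, ?_⟩
        simp only [φ1, he]
        rw [mul_assoc, hkk, inv_mul_cancel_left]
      · rintro k ⟨_, j, hj, he⟩
        refine ⟨j, hj, ?_⟩
        simp only [φ1]
        rw [mul_assoc, he, inv_mul_cancel_left]
      · intro g hg h
        refine T.inj g (parab_mono cs hJ1J hg) ?_
        simp only [φ1] at h
        have : φ g = y2 * (y2⁻¹ * φ g * y2) * y2⁻¹ := by simp [mul_assoc]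
        rw [this, h]; simp
    have hφ1 : ∀ g, y2 * φ1 g = φ g * y2 := by
      intro g; simp [φ1, mul_assoc]
    -- `b'` is minimal
    have hb'min : IsMinRep cs J1 b' := by
      intro g hg
      have hgJ := parab_mono cs hJ1J hg
      have h1 := hw' (φ1 g) (parab_mono cs hKJ (T1.mem hg))
      rw [hlw', hw'e, mul_assoc, hφ1, ← mul_assoc, ← T.mul _ hb' _ hgJ,
        length_add' cs hy' (T.mem (Subgroup.mul_mem _ hb' hgJ)),
        T.length_eq (Subgroup.mul_mem _ hb' hgJ)] at h1
      omega
    -- lengths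
    have hlb : cs.length b ≤ cs.length b' := by
      have h1 := stp_length cs hto
      rw [length_add cs hy hbJ] at h1
      omega
    by_cases hJJ : J1 = J
    · have h1 := hb'min b'⁻¹ (by rw [hJJ]; exact Subgroup.inv_mem _ hb')
      rw [mul_inv_cancel, cs.length_one] at h1
      have e1 : b' = 1 := cs.length_eq_zero_iff.mp (by omega)
      have e2 : b = 1 := cs.length_eq_zero_iff.mp (by omega)
      rw [e2] at hto
      rw [e1] at hback
      exact hto.trans hback
    · -- the special set `I1`
      set I1 : Set B := {k | k ∈ J1 ∧ ∃ i ∈ I, b' * cs.simple k = cs.simple i * b'} with hI1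
      have key : ∀ i ∈ I, ∃ i' ∈ I, ∃ k ∈ I1, w' * cs.simple i = φ (cs.simple i') * w' ∧
          φ (cs.simple k) * y2 = y2 * cs.simple i ∧ b' * cs.simple k = cs.simple i' * b' := by
        intro i hi
        obtain ⟨i', hi', he⟩ := hI i hi
        have hi'J := simple_mem cs (hIJ hi')
        have hcJ : b'⁻¹ * cs.simple i' * b' ∈ parab cs J :=
          Subgroup.mul_mem _ (Subgroup.mul_mem _ (Subgroup.inv_mem _ hb') hi'J) hb'
        have h1 : φ (b'⁻¹ * cs.simple i' * b') * y2 = y2 * cs.simple i := by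
          rw [T.mul _ (Subgroup.mul_mem _ (Subgroup.inv_mem _ hb') hi'J) _ hb',
            T.mul _ (Subgroup.inv_mem _ hb') _ hi'J, T.inv hb', mul_assoc, ← hw'e, mul_assoc, ← he,
            hw'e]
          simp [mul_assoc]
        have h2 := length_add' cs hy' (T.mem hcJ)
        rw [h1, length_add cs hy (simple_mem cs (hIJ hi)), cs.length_simple] at h2
        obtain ⟨k', hk', hk'e⟩ := simple_of_length_one cs (T.mem hcJ) (by omega)
        obtain ⟨k, hk, hke⟩ := T.surj k' hk'
        have h3 : cs.simple k = b'⁻¹ * cs.simple i' * b' :=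
          T.injective (simple_mem cs hk) hcJ (by rw [hke, hk'e])
        have h4 : b' * cs.simple k = cs.simple i' * b' := by
          rw [h3]; simp [mul_assoc]
        refine ⟨i', hi', k, ⟨⟨hk, k', ⟨hk', i, hIJ hi, ?_⟩, hke⟩, i', hi', h4⟩, he, ?_, h4⟩
        · rw [← hk'e, h1]
        · rw [h3, h1]
      have hI1J : I1 ⊆ J1 := fun _ h => h.1
      have key2 : ∃ v' ∈ parab cs I, ∃ v'' ∈ parab cs I1, w' * v = φ v' * w' ∧
          v' * b' = b' * v'' := by
        refine parab_induction cs (p := fun v => ∃ v' ∈ parab cs I, ∃ v'' ∈ parab cs I1,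
          w' * v = φ v' * w' ∧ v' * b' = b' * v'') ?_ ?_ hv
        · exact ⟨1, Subgroup.one_mem _, 1, Subgroup.one_mem _, by simp [T.one], by simp⟩
        · rintro i hi g hg ⟨v', hv', v'', hv'', e1, e2⟩
          obtain ⟨i', hi', k, hk, e3, e4, e5⟩ := key i hi
          refine ⟨cs.simple i' * v', Subgroup.mul_mem _ (simple_mem cs hi') hv',
            cs.simple k * v'', Subgroup.mul_mem _ (simple_mem cs hk) hv'', ?_, ?_⟩
          · rw [← mul_assoc, e3, mul_assoc, e1, T.mul _ (simple_mem cs (hIJ hi')) _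
              (parab_mono cs hIJ hv'), mul_assoc]
          · rw [mul_assoc, e2, ← mul_assoc, ← e5, mul_assoc]
      obtain ⟨v', hv', v'', hv'', e1, e2⟩ := key2
      have hv'J := parab_mono cs hIJ hv'
      set g := a⁻¹ * u * v' * b' with hg
      have hgJ : g ∈ parab cs J := Subgroup.mul_mem _ (Subgroup.mul_mem _
        (Subgroup.mul_mem _ (Subgroup.inv_mem _ ha) hu) hv'J) hb'
      have hφg : φ g = (φ a)⁻¹ * φ u * φ v' * φ b' := by
        rw [hg, T.mul _ (Subgroup.mul_mem _ (Subgroup.mul_mem _ (Subgroup.inv_mem _ ha) hu) hv'J)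
          _ hb', T.mul _ (Subgroup.mul_mem _ (Subgroup.inv_mem _ ha) hu) _ hv'J,
          T.mul _ (Subgroup.inv_mem _ ha) _ hu, T.inv ha]
      have e3 : y2 * b = φ g * y2 * (b' * v'') * g⁻¹ := by
        have h1 : φ a * y2 * d = φ u * (φ v' * (φ b' * y2)) * u⁻¹ := by
          rw [← hxe, ← hwx, hw, mul_assoc (φ u), e1, hw'e]
        have h2 : y2 * d = (φ a)⁻¹ * (φ u * (φ v' * (φ b' * y2)) * u⁻¹) := by
          rw [← h1]; simp [mul_assoc]
        rw [hb, ← mul_assoc, h2, ← e2, hφg, hg]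
        simp [mul_assoc]
      have hv''J : v'' ∈ parab cs J := parab_mono cs (hI1J.trans hJ1J) hv''
      have hgJ1 : g ∈ parab cs J1 := by
        refine T.mem_of_mem hK'J hgJ (double_coset cs hy hy' hy hy' (T.mem hgJ)
          (d := b * g * (b' * v'')⁻¹) ?_ ?_).2
        · exact Subgroup.mul_mem _ (Subgroup.mul_mem _ hbJ hgJ)
            (Subgroup.inv_mem _ (Subgroup.mul_mem _ hb' hv''J))
        · rw [← mul_assoc, ← mul_assoc, e3]; simp [mul_assoc]
      have hcard : J1.ncard < n := by
        rw [← hn]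
        exact Set.ncard_lt_ncard (hJ1J.ssubset_of_ne hJJ) (Set.toFinite J)
      have hrec := IH _ hcard J1 K φ1 rfl T1 b' hb'min I1 hI1J (by
        rintro k ⟨hk, i, hi, hki⟩
        obtain ⟨i', hi', k2, hk2, _, e5, _⟩ := key i hi
        refine ⟨k2, hk2, ?_⟩
        rw [hki]
        simp only [φ1]
        rw [mul_assoc y2⁻¹, e5, inv_mul_cancel_left]) v'' hv'' g hgJ1 b (by
          have : y2 * b = y2 * (φ1 g * b' * v'' * g⁻¹) := by
            rw [e3, ← hφ1]; simp [mul_assoc]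
          exact mul_left_cancel this) hlb
      have hlift := stp_lift hJ1J hy hKJ T1 hφ1 hbJ hrec
      exact hto.trans (hlift.1.trans hback)

end Twisted

/-- If `w' = π_{J,δ}(w)` (i.e. `w' ∈ W^J` and
`w ∈ W_J ·_δ (w' W_{I(J,w',δ)})`) and `ℓ(w) = ℓ(w')`, then `w ≈_{J,δ} w'`. -/
theorem stmt5 (hδ : MapsSimples cs J J' δ) (w w' : W) (hw' : IsMinRep cs J w')
    (hproj : w ∈ orbSet cs J J' δ (coset cs J J' δ w'))
    (hlen : cs.length w = cs.length w') :
    Approx cs J J' δ w w' := by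
  classical
  let φ : W → W := fun u => if h : u ∈ parab cs J then (δ ⟨u, h⟩ : W) else 1
  have hφ : ∀ u (h : u ∈ parab cs J), φ u = (δ ⟨u, h⟩ : W) := fun u h => dif_pos h
  have hφs : ∀ j (h : j ∈ J), φ (cs.simple j) = (δ (sJ cs J j h) : W) :=
    fun j h => hφ _ (simple_mem cs h)
  have T : Tw cs J J' φ := by
    refine ⟨?_, ?_, ?_, ?_⟩
    · intro u hu v hv
      rw [hφ u hu, hφ v hv, hφ _ (Subgroup.mul_mem _ hu hv), ← Subgroup.coe_mul, ← map_mul]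
      rfl
    · intro j hj
      rw [hφs j hj]
      exact hδ.1 j hj
    · intro j' hj'
      obtain ⟨j, hj, he⟩ := hδ.2 j' hj'
      exact ⟨j, hj, by rw [hφs j hj, he]⟩
    · intro u hu h
      rw [hφ u hu] at h
      have h1 : δ ⟨u, hu⟩ = 1 := Subtype.ext h
      have h2 := (map_eq_one_iff δ δ.injective).mp h1
      exact congrArg Subtype.val h2
  obtain ⟨u, x, ⟨v, hv, rfl⟩, hw⟩ := hproj
  have hI : ∀ k ∈ Iset cs J J' δ w', ∃ j ∈ Iset cs J J' δ w',
      w' * cs.simple k = φ (cs.simple j) * w' := by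
    rintro k ⟨L, hL, hk⟩
    obtain ⟨j, hj, hjL, he⟩ := hL.2 k hk
    refine ⟨j, ⟨L, hL, hjL⟩, ?_⟩
    rw [hφs j hj, ← he]
    simp
  have hIJ : Iset cs J J' δ w' ⊆ J := by
    rintro k ⟨L, hL, hk⟩
    exact hL.1 hk
  have hto := main_aux cs _ J J' φ rfl T w' hw' _ hIJ hI v hv u u.2 w
    (by rw [hw, hφ u u.2]; simp [mul_assoc]) hlen.le
  have hmono : ∀ a b, Relation.ReflTransGen (Stp cs J φ) a b → ToRel cs J J' δ a b := by
    intro a b h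
    refine Relation.ReflTransGen.mono ?_ _ _ h
    rintro a b ⟨i, hi, he, hl⟩
    exact ⟨i, hi, by rw [he, hφs i hi], hl⟩
  exact ⟨hmono _ _ hto, hmono _ _ (stp_reverse T hto hlen.le)⟩

end PartialConjugation
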